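/- With f₂(x) = x², assume κ₄(F_{f₂,n}(Z)) → 0 as n → ∞. Then there exist constants c, C > 0 such that for every n ≥ 1: c · max{ κ₄(F_{f₂,n}(Z)), |κ₃(F_{f₂,n}(Z))| } ≤ d_TV( F_{f₂,n}(Z), N ) ≤ C · max{ κ₄(F_{f₂,n}(Z)), |κ₃(F_{f₂,n}(Z))| }, where N is a standard Gaussian random variable. -/

import Mathlib

open MeasureTheory ProbabilityTheory Filter
open scoped NNReal ENNReal

noncomputable section

variable {Ω : Type*} [MeasureSpace Ω]

/-- `Z` is a centered stationary Gaussian sequence with covariance `r`. -/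
def IsCSG (Z : ℤ → Ω → ℝ) (r : ℤ → ℝ) : Prop :=
  (∀ k, Measurable (Z k)) ∧
  (∀ (s : Finset ℤ) (a : ℤ → ℝ), ∃ v : ℝ≥0,
    Measure.map (fun ω => ∑ k ∈ s, a k * Z k ω) (ℙ : Measure Ω) = gaussianReal 0 v) ∧
  (∀ j k : ℤ, ∫ ω, Z j ω * Z k ω = r (k - j)) ∧
  0 < r 0

/-- `m`-th probabilists' Hermite polynomial, as a function on `ℝ`. -/
def hermiteFun (m : ℕ) (x : ℝ) : ℝ := Polynomial.aeval x (Polynomial.hermite m)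

/-- The polynomial `f_q(x) = ∑_{k=0}^{q/2} d_{2k} He_{2k}(x/√r0)`. -/
def fpoly (r0 : ℝ) (d : ℕ → ℝ) (q : ℕ) (x : ℝ) : ℝ :=
  ∑ k ∈ Finset.range (q / 2 + 1), d (2 * k) * hermiteFun (2 * k) (x / Real.sqrt r0)

/-- Polynomial variation `Q_{f,n}(X)`. -/
def Qvar (f : ℝ → ℝ) (X : ℤ → Ω → ℝ) (n : ℕ) (ω : Ω) : ℝ :=
  (1 / (n : ℝ)) * ∑ i ∈ Finset.range n, f (X (i : ℤ) ω)

/-- `λ_f(X) = E[f(X_0)]`. -/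
def lamE (f : ℝ → ℝ) (X : ℤ → Ω → ℝ) : ℝ := ∫ ω, f (X 0 ω)

/-- `U_{f,n}(X) = √n (Q_{f,n}(X) − λ_f(X))`. -/
def Ustat (f : ℝ → ℝ) (X : ℤ → Ω → ℝ) (n : ℕ) (ω : Ω) : ℝ :=
  Real.sqrt n * (Qvar f X n ω - lamE f X)

/-- Variance of `U_{f,n}(X)`. -/
def varU (f : ℝ → ℝ) (X : ℤ → Ω → ℝ) (n : ℕ) : ℝ := ∫ ω, (Ustat f X n ω) ^ 2

/-- Standardized statistic `F_{f,n}(X)`. -/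
def Fstat (f : ℝ → ℝ) (X : ℤ → Ω → ℝ) (n : ℕ) (ω : Ω) : ℝ :=
  Ustat f X n ω / Real.sqrt (varU f X n)

/-- fourth cumulant `κ₄(X) = E[X⁴] − 3 (E[X²])²` of a centered random variable. -/
def kappa4 (X : Ω → ℝ) : ℝ := (∫ ω, X ω ^ 4) - 3 * (∫ ω, X ω ^ 2) ^ 2

/-- third cumulant `κ₃(X) = E[X³]`. -/
def kappa3 (X : Ω → ℝ) : ℝ := ∫ ω, X ω ^ 3

/-- `u_{f_q}(Z) = ∑_{k=1}^{q/2} d_{2k}² (2k)! ∑_{j∈ℤ} (r(j)/r(0))^{2k}`. -/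
def ufq (r : ℤ → ℝ) (d : ℕ → ℝ) (q : ℕ) : ℝ :=
  ∑ k ∈ Finset.Icc 1 (q / 2),
    (d (2 * k)) ^ 2 * (Nat.factorial (2 * k)) * ∑' j : ℤ, (r j / r 0) ^ (2 * k)

/-- Total variation distance between two laws on `ℝ`. -/
def dTV (μ ν : Measure ℝ) : ℝ :=
  ⨆ A : {A : Set ℝ // MeasurableSet A}, |(μ A.1).toReal - (ν A.1).toReal|

/-- Wasserstein distance between two laws on `ℝ`. -/
def dW (μ ν : Measure ℝ) : ℝ :=
  ⨆ f : {f : ℝ → ℝ // LipschitzWith 1 f}, |(∫ x, f.1 x ∂μ) - ∫ x, f.1 x ∂ν|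

/-- The quadratic function `f₂(x) = x²`. -/
def f2 : ℝ → ℝ := fun x => x ^ 2

/-- `U_{f₂,n}(X) = √n (Q_{f₂,n}(X) − r(0))`, quadratic case. -/
def U2 (X : ℤ → Ω → ℝ) (r0 : ℝ) (n : ℕ) (ω : Ω) : ℝ :=
  Real.sqrt n * (Qvar f2 X n ω - r0)

/-- Variance of `U_{f₂,n}`. -/
def varU2 (X : ℤ → Ω → ℝ) (r0 : ℝ) (n : ℕ) : ℝ := ∫ ω, (U2 X r0 n ω) ^ 2

/-- Standardized quadratic statistic `F_{f₂,n}`. -/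
def F2stat (X : ℤ → Ω → ℝ) (r0 : ℝ) (n : ℕ) (ω : Ω) : ℝ :=
  U2 X r0 n ω / Real.sqrt (varU2 X r0 n)

/-- `p`-th order finite difference of a sequence of processes. -/
def fdiff : ℕ → (ℤ → Ω → ℝ) → (ℤ → Ω → ℝ)
  | 0, Z => Z
  | (p + 1), Z => fun k ω => fdiff p Z (k + 1) ω - fdiff p Z k ω

/-!
Diagonalizing the covariance matrix of the Gaussian vector `(Z₀, …, Zₙ₋₁)` shows that the statistic
has the law of `∑ αᵢ (Nᵢ² - 1)` with independent standard Gaussian `Nᵢ`, where `αᵢ ≥ 0` and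
`∑ αᵢ² = 1/2`. Hence `κ₃ = 8 ∑ αᵢ³` and `κ₄ = 48 ∑ αᵢ⁴ ≤ 6 κ₃`, so the maximum in the theorem is
comparable to `∑ αᵢ³`.

For the upper bound, Stein's equation is solved twice, first for the test function and then for the
derivative of the solution: after two Gaussian integrations by parts the error is bounded by a
constant times `∑ αᵢ³`. The lower bound tests against the sine, whose standard Gaussian mean
vanishes by symmetry, whereas the explicit characteristic function of `∑ αᵢ (Nᵢ² - 1)` gives
`|E sin F| ≥ c ∑ αᵢ³`.
-/

/-! ### Total variation distance -/

section TotalVariation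

variable (μ ν : Measure ℝ) [IsProbabilityMeasure μ] [IsProbabilityMeasure ν]

lemma bddAbove_range_abs_sub : BddAbove (Set.range fun A : {A : Set ℝ // MeasurableSet A} =>
    |(μ A.1).toReal - (ν A.1).toReal|) := by
  refine ⟨1, ?_⟩
  rintro _ ⟨A, rfl⟩
  exact abs_sub_le_of_le_of_le measureReal_nonneg measureReal_le_one measureReal_nonneg
    measureReal_le_one |>.trans_eq (sub_zero 1)

lemma abs_measureReal_sub_le_dTV {A : Set ℝ} (hA : MeasurableSet A) :
    |μ.real A - ν.real A| ≤ dTV μ ν :=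
  le_ciSup (bddAbove_range_abs_sub μ ν) ⟨A, hA⟩

lemma abs_integral_sub_le_mul_dTV_of_nonneg {h : ℝ → ℝ} (hm : Measurable h) {M : ℝ}
    (h0 : ∀ x, 0 ≤ h x) (hM : ∀ x, h x ≤ M) :
    |(∫ x, h x ∂μ) - ∫ x, h x ∂ν| ≤ M * dTV μ ν := by
  have hM0 : 0 ≤ M := (h0 0).trans (hM 0)
  have layercake : ∀ (ρ : Measure ℝ) [IsProbabilityMeasure ρ],
      ∫ x, h x ∂ρ = ∫ t in Set.Ioc 0 M, ρ.real {a | t ≤ h a} := fun ρ _ =>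
    (Integrable.of_bound hm.aestronglyMeasurable M (.of_forall fun x => by
      rw [Real.norm_of_nonneg (h0 x)]; exact hM x)).integral_eq_integral_Ioc_meas_le
      (.of_forall h0) (.of_forall hM)
  have tail_integrable : ∀ (ρ : Measure ℝ) [IsProbabilityMeasure ρ],
      IntegrableOn (fun t => ρ.real {a | t ≤ h a}) (Set.Ioc 0 M) := fun ρ _ => by
    have : Antitone fun t => ρ.real {a | t ≤ h a} := fun s t hst =>
      measureReal_mono fun a ha => le_trans hst ha
    exact (this.antitoneOn (Set.Icc 0 M)).integrableOn_isCompact isCompact_Icc |>.mono_set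
      Set.Ioc_subset_Icc_self
  rw [layercake μ, layercake ν, ← integral_sub (tail_integrable μ) (tail_integrable ν),
    ← Real.norm_eq_abs]
  refine (norm_setIntegral_le_of_norm_le_const (C := dTV μ ν) (by simp) fun t _ =>
    abs_measureReal_sub_le_dTV μ ν (measurableSet_le measurable_const hm)).trans_eq ?_
  simp [hM0, mul_comm]

lemma abs_integral_sub_le_mul_dTV {h : ℝ → ℝ} (hm : Measurable h) {a b : ℝ}
    (ha : ∀ x, a ≤ h x) (hb : ∀ x, h x ≤ b) :
    |(∫ x, h x ∂μ) - ∫ x, h x ∂ν| ≤ (b - a) * dTV μ ν := by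
  have hint : ∀ (ρ : Measure ℝ) [IsProbabilityMeasure ρ], Integrable h ρ := fun ρ _ =>
    .of_mem_Icc a b hm.aemeasurable (.of_forall fun x => ⟨ha x, hb x⟩)
  have := abs_integral_sub_le_mul_dTV_of_nonneg μ ν (hm.sub_const a) (M := b - a)
    (fun x => sub_nonneg.2 (ha x)) fun x => sub_le_sub_right (hb x) a
  simpa [integral_sub (hint _) (integrable_const a)] using this

lemma dTV_le_of_isClosed {B : ℝ} (hB : ∀ K, IsClosed K → |μ.real K - ν.real K| ≤ B) :
    dTV μ ν ≤ B := by
  have inner_regular : ∀ (ρ σ : Measure ℝ) [IsProbabilityMeasure ρ] [IsProbabilityMeasure σ],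
      (∀ K, IsClosed K → ρ.real K - σ.real K ≤ B) →
      ∀ A, MeasurableSet A → ρ.real A - σ.real A ≤ B := by
    intro ρ σ _ _ hK A hA
    refine le_of_forall_pos_le_add fun ε hε => ?_
    obtain ⟨K, hKA, hKc, hlt⟩ := hA.exists_isClosed_lt_add (measure_ne_top ρ A)
      (ε := ENNReal.ofReal ε) (by simpa using hε)
    have hρ : ρ.real A ≤ ρ.real K + ε := by
      have := ENNReal.toReal_mono (by finiteness) hlt.le
      rwa [ENNReal.toReal_add (by finiteness) (by finiteness),
        ENNReal.toReal_ofReal hε.le] at this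
    have hσ : σ.real K ≤ σ.real A := measureReal_mono hKA
    linarith [hK K hKc]
  have : Nonempty {A : Set ℝ // MeasurableSet A} := ⟨⟨∅, MeasurableSet.empty⟩⟩
  refine ciSup_le fun A => abs_sub_le_iff.2 ⟨?_, ?_⟩
  · exact inner_regular μ ν (fun K hK => (abs_sub_le_iff.1 (hB K hK)).1) A.1 A.2
  · exact inner_regular ν μ (fun K hK => (abs_sub_le_iff.1 (hB K hK)).2) A.1 A.2

lemma dTV_le_of_continuous {B : ℝ} (hB : ∀ h : ℝ → ℝ, Continuous h → (∀ x, 0 ≤ h x) →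
    (∀ x, h x ≤ 1) → |(∫ x, h x ∂μ) - ∫ x, h x ∂ν| ≤ B) : dTV μ ν ≤ B := by
  refine dTV_le_of_isClosed μ ν fun K hK => ?_
  have δpos : ∀ n : ℕ, (0 : ℝ) < 1 / ((n : ℝ) + 1) := fun n => Nat.one_div_pos_of_nat
  have lim : ∀ (ρ : Measure ℝ) [IsProbabilityMeasure ρ], Tendsto
      (fun n => ∫ x, (thickenedIndicator (δpos n) K x : ℝ) ∂ρ) atTop (nhds (ρ.real K)) :=
    fun ρ _ => tendsto_integral_thickenedIndicator_of_isClosed ρ hK δpos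
      tendsto_one_div_add_atTop_nhds_zero_nat
  refine le_of_tendsto ((lim μ).sub (lim ν)).abs (.of_forall fun n => hB _ ?_ ?_ fun x => ?_)
  · exact NNReal.continuous_coe.comp (thickenedIndicator (δpos n) K).continuous
  · exact fun x => NNReal.coe_nonneg _
  · exact_mod_cast thickenedIndicator_le_one (δpos n) K x

end TotalVariation

/-! ### The Gaussian density -/

section GaussianDensity

lemma hasDerivAt_gaussianPDFReal (μ : ℝ) (v : ℝ≥0) (x : ℝ) :
    HasDerivAt (gaussianPDFReal μ v) (-((x - μ) / v) * gaussianPDFReal μ v x) x := by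
  have hexp : HasDerivAt (fun y : ℝ => -(y - μ) ^ 2 / (2 * v)) (-((x - μ) / v)) x := by
    refine ((((hasDerivAt_id x).sub_const μ).pow 2).neg.div_const (2 * (v : ℝ))).congr_deriv ?_
    simp only [id, Nat.cast_ofNat, Nat.add_one_sub_one, pow_one, mul_one, ← mul_neg]
    rw [mul_div_mul_left _ _ two_ne_zero, neg_div]
  rw [gaussianPDFReal_def]
  exact (hexp.exp.const_mul _).congr_deriv (by ring)

lemma continuous_gaussianPDFReal (μ : ℝ) (v : ℝ≥0) : Continuous (gaussianPDFReal μ v) :=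
  continuous_iff_continuousAt.2 fun x => (hasDerivAt_gaussianPDFReal μ v x).continuousAt

lemma gaussianPDFReal_zero_abs (v : ℝ≥0) (x : ℝ) :
    gaussianPDFReal 0 v |x| = gaussianPDFReal 0 v x := by
  simp [gaussianPDFReal]

lemma integrable_gaussianReal_iff {μ : ℝ} {v : ℝ≥0} (hv : v ≠ 0) {g : ℝ → ℝ} :
    Integrable g (gaussianReal μ v) ↔ Integrable fun x => g x * gaussianPDFReal μ v x := by
  rw [gaussianReal_of_var_ne_zero μ hv, integrable_withDensity_iff (measurable_gaussianPDF μ v)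
    (.of_forall fun x => gaussianPDF_lt_top)]
  simp only [toReal_gaussianPDF]

lemma integral_gaussianReal {μ : ℝ} {v : ℝ≥0} (hv : v ≠ 0) (g : ℝ → ℝ) :
    ∫ x, g x ∂(gaussianReal μ v) = ∫ x, g x * gaussianPDFReal μ v x := by
  simp only [integral_gaussianReal_eq_integral_smul hv, smul_eq_mul, mul_comm]

lemma integral_Ioi_mul_gaussianPDFReal (x : ℝ) :
    ∫ y in Set.Ioi x, y * gaussianPDFReal 0 1 y = gaussianPDFReal 0 1 x := by
  have hderiv : ∀ y, HasDerivAt (fun y => -gaussianPDFReal 0 1 y) (y * gaussianPDFReal 0 1 y) y :=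
    fun y => (hasDerivAt_gaussianPDFReal 0 1 y).neg.congr_deriv (by simp)
  have hint : Integrable fun y : ℝ => y * gaussianPDFReal 0 1 y :=
    (integrable_gaussianReal_iff one_ne_zero).1 ((memLp_id_gaussianReal 1).integrable le_rfl)
  have hlim := tendsto_zero_of_hasDerivAt_of_integrableOn_Ioi (a := x) (fun y _ => hderiv y)
    hint.integrableOn (integrable_gaussianPDFReal 0 1).neg.integrableOn
  simpa using integral_Ioi_of_hasDerivAt_of_tendsto' (a := x) (fun y _ => hderiv y)
    hint.integrableOn hlim

lemma mul_integral_Ioi_gaussianPDFReal_le (x : ℝ) :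
    x * ∫ y in Set.Ioi x, gaussianPDFReal 0 1 y ≤ gaussianPDFReal 0 1 x := by
  rw [← integral_Ioi_mul_gaussianPDFReal x, ← integral_const_mul]
  refine setIntegral_mono_on ((integrable_gaussianPDFReal 0 1).const_mul x).integrableOn
    ((integrable_gaussianReal_iff one_ne_zero).1
      ((memLp_id_gaussianReal 1).integrable le_rfl)).integrableOn measurableSet_Ioi fun y hy => ?_
  exact mul_le_mul_of_nonneg_right (le_of_lt hy) (gaussianPDFReal_nonneg 0 1 y)

lemma integral_Ioi_gaussianPDFReal_le {x : ℝ} (hx : 0 ≤ x) :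
    ∫ y in Set.Ioi x, gaussianPDFReal 0 1 y ≤ √(2 * Real.pi) * gaussianPDFReal 0 1 x := by
  have hle : ∀ y ∈ Set.Ioi x, gaussianPDFReal 0 1 y ≤
      √(2 * Real.pi) * gaussianPDFReal 0 1 x * gaussianPDFReal x 1 y := by
    intro y hy
    have hxy : x * x ≤ x * y := mul_le_mul_of_nonneg_left (le_of_lt hy) hx
    simp only [gaussianPDFReal, NNReal.coe_one, mul_one, sub_zero]
    rw [mul_inv_cancel_left₀ (by positivity), mul_left_comm, ← Real.exp_add]
    gcongr
    linarith
  have hint : Integrable fun y => √(2 * Real.pi) * gaussianPDFReal 0 1 x * gaussianPDFReal x 1 y :=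
    (integrable_gaussianPDFReal x 1).const_mul _
  calc ∫ y in Set.Ioi x, gaussianPDFReal 0 1 y
      ≤ ∫ y in Set.Ioi x, √(2 * Real.pi) * gaussianPDFReal 0 1 x * gaussianPDFReal x 1 y :=
        setIntegral_mono_on (integrable_gaussianPDFReal 0 1).integrableOn hint.integrableOn
          measurableSet_Ioi hle
    _ ≤ ∫ y, √(2 * Real.pi) * gaussianPDFReal 0 1 x * gaussianPDFReal x 1 y :=
        setIntegral_le_integral hint (.of_forall fun y =>
          mul_nonneg (mul_nonneg (by positivity) (gaussianPDFReal_nonneg 0 1 x))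
            (gaussianPDFReal_nonneg x 1 y))
    _ = √(2 * Real.pi) * gaussianPDFReal 0 1 x := by
        rw [integral_const_mul, integral_gaussianPDFReal_eq_one x one_ne_zero, mul_one]

lemma integral_sub_mul_gaussianReal {μ : ℝ} {v : ℝ≥0} {h h' : ℝ → ℝ}
    (hd : ∀ x, HasDerivAt h (h' x) x) (hi : Integrable h (gaussianReal μ v))
    (hi' : Integrable h' (gaussianReal μ v))
    (hxi : Integrable (fun x => (x - μ) * h x) (gaussianReal μ v)) :
    ∫ x, (x - μ) * h x ∂(gaussianReal μ v) = v * ∫ x, h' x ∂(gaussianReal μ v) := by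
  rcases eq_or_ne v 0 with rfl | hv
  · simp
  rw [integrable_gaussianReal_iff hv] at hi hi' hxi
  have hv' : (v : ℝ) ≠ 0 := NNReal.coe_ne_zero.2 hv
  have key : ∀ x, h x * (-((x - μ) / v) * gaussianPDFReal μ v x) =
      -(v : ℝ)⁻¹ * ((x - μ) * h x * gaussianPDFReal μ v x) := fun x => by ring
  have parts := integral_mul_deriv_eq_deriv_mul_of_integrable (fun x _ => hd x)
    (fun x _ => hasDerivAt_gaussianPDFReal μ v x)
    ((hxi.const_mul (-(v : ℝ)⁻¹)).congr (.of_forall fun x => (key x).symm)) hi' hi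
  simp only [key, integral_const_mul] at parts
  rw [integral_gaussianReal hv, integral_gaussianReal hv]
  field_simp at parts
  linarith

end GaussianDensity

/-! ### Stein's equation -/

section SteinEquation

/-- The bounded solution of Stein's equation `f' x - x * f x = h x - E[h(N)]`, where `N` is a
standard Gaussian variable. -/
def steinSolution (h : ℝ → ℝ) (x : ℝ) : ℝ :=
  (∫ y in Set.Iic x, (h y - ∫ z, h z ∂(gaussianReal 0 1)) * gaussianPDFReal 0 1 y) /
    gaussianPDFReal 0 1 x

variable {h k : ℝ → ℝ} {M : ℝ}

lemma abs_integral_mul_le_mul_integral {E : Type*} [MeasurableSpace E] {μ : Measure E}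
    {u w : E → ℝ} (hu : ∀ x, |u x| ≤ M) (hw : Integrable w μ) (hw0 : ∀ x, 0 ≤ w x) :
    |∫ x, u x * w x ∂μ| ≤ M * ∫ x, w x ∂μ := by
  rw [← integral_const_mul, ← Real.norm_eq_abs]
  refine norm_integral_le_of_norm_le (hw.const_mul M) (.of_forall fun x => ?_)
  rw [Real.norm_eq_abs, abs_mul, abs_of_nonneg (hw0 x)]
  exact mul_le_mul_of_nonneg_right (hu x) (hw0 x)

-- To the right of `0`, centering turns the integral over `(-∞, x]` into the one over `(x, ∞)`.
lemma abs_integral_Iic_mul_gaussianPDFReal_le (hk : ∀ x, |k x| ≤ M)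
    (hki : Integrable k (gaussianReal 0 1)) (hk0 : ∫ x, k x ∂(gaussianReal 0 1) = 0) (x : ℝ) :
    |∫ y in Set.Iic x, k y * gaussianPDFReal 0 1 y| ≤
      M * ∫ y in Set.Ioi |x|, gaussianPDFReal 0 1 y := by
  rw [integrable_gaussianReal_iff one_ne_zero] at hki
  rw [integral_gaussianReal one_ne_zero] at hk0
  rcases le_total x 0 with hx | hx
  · refine (abs_integral_mul_le_mul_integral hk
      (integrable_gaussianPDFReal 0 1).integrableOn (gaussianPDFReal_nonneg 0 1)).trans_eq ?_
    rw [abs_of_nonpos hx, ← integral_comp_neg_Iic]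
    simp only [gaussianPDFReal, sub_zero, neg_sq]
  · have hsplit := intervalIntegral.integral_Iic_add_Ioi (b := x) (μ := volume)
      hki.integrableOn hki.integrableOn
    rw [eq_neg_of_add_eq_zero_left (hsplit.trans hk0), abs_neg, abs_of_nonneg hx]
    exact abs_integral_mul_le_mul_integral hk
      (integrable_gaussianPDFReal 0 1).integrableOn (gaussianPDFReal_nonneg 0 1)

lemma abs_sub_integral_gaussianReal_le (hM : ∀ x, |h x| ≤ M) (x : ℝ) :
    |h x - ∫ y, h y ∂(gaussianReal 0 1)| ≤ 2 * M := by
  have hmean : |∫ y, h y ∂(gaussianReal 0 1)| ≤ M := by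
    simpa using norm_integral_le_of_norm_le_const (μ := gaussianReal 0 1) (f := h)
      (.of_forall hM)
  linarith [abs_sub (h x) (∫ y, h y ∂(gaussianReal 0 1)), hM x]

lemma abs_steinSolution_mul_gaussianPDFReal_le (hc : Continuous h) (hM : ∀ x, |h x| ≤ M)
    (x : ℝ) :
    |steinSolution h x| * gaussianPDFReal 0 1 x ≤
      2 * M * ∫ y in Set.Ioi |x|, gaussianPDFReal 0 1 y := by
  have hw := gaussianPDFReal_pos 0 1 x one_ne_zero
  have hhi : Integrable h (gaussianReal 0 1) :=
    .of_bound hc.aestronglyMeasurable M (.of_forall hM)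
  rw [steinSolution, abs_div, abs_of_pos hw, div_mul_cancel₀ _ hw.ne']
  refine abs_integral_Iic_mul_gaussianPDFReal_le (abs_sub_integral_gaussianReal_le hM)
    (hhi.sub (integrable_const _)) ?_ x
  simp [integral_sub hhi (integrable_const _)]

lemma abs_steinSolution_le (hc : Continuous h) (hM : ∀ x, |h x| ≤ M) (x : ℝ) :
    |steinSolution h x| ≤ 2 * √(2 * Real.pi) * M := by
  have hM0 : 0 ≤ M := (abs_nonneg _).trans (hM 0)
  refine le_of_mul_le_mul_right ?_ (gaussianPDFReal_pos 0 1 x one_ne_zero)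
  calc |steinSolution h x| * gaussianPDFReal 0 1 x
      ≤ 2 * M * ∫ y in Set.Ioi |x|, gaussianPDFReal 0 1 y :=
        abs_steinSolution_mul_gaussianPDFReal_le hc hM x
    _ ≤ 2 * M * (√(2 * Real.pi) * gaussianPDFReal 0 1 |x|) := by
        gcongr
        exact integral_Ioi_gaussianPDFReal_le (abs_nonneg x)
    _ = 2 * √(2 * Real.pi) * M * gaussianPDFReal 0 1 x := by
        rw [gaussianPDFReal_zero_abs]
        ring

lemma abs_mul_steinSolution_le (hc : Continuous h) (hM : ∀ x, |h x| ≤ M) (x : ℝ) :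
    |x * steinSolution h x| ≤ 2 * M := by
  have hM0 : 0 ≤ M := (abs_nonneg _).trans (hM 0)
  refine le_of_mul_le_mul_right ?_ (gaussianPDFReal_pos 0 1 x one_ne_zero)
  calc |x * steinSolution h x| * gaussianPDFReal 0 1 x
      = |x| * (|steinSolution h x| * gaussianPDFReal 0 1 x) := by rw [abs_mul, mul_assoc]
    _ ≤ |x| * (2 * M * ∫ y in Set.Ioi |x|, gaussianPDFReal 0 1 y) :=
        mul_le_mul_of_nonneg_left (abs_steinSolution_mul_gaussianPDFReal_le hc hM x) (abs_nonneg x)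
    _ = 2 * M * (|x| * ∫ y in Set.Ioi |x|, gaussianPDFReal 0 1 y) := by ring
    _ ≤ 2 * M * gaussianPDFReal 0 1 |x| :=
        mul_le_mul_of_nonneg_left (mul_integral_Ioi_gaussianPDFReal_le |x|) (by positivity)
    _ = 2 * M * gaussianPDFReal 0 1 x := by rw [gaussianPDFReal_zero_abs 1 x]

lemma hasDerivAt_integral_Iic {g : ℝ → ℝ} (hg : Integrable g) (hc : Continuous g) (x : ℝ) :
    HasDerivAt (fun x => ∫ y in Set.Iic x, g y) (g x) x := by
  have hsplit : ∀ x, ∫ y in Set.Iic x, g y =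
      (∫ y in Set.Iic 0, g y) + ∫ y in (0 : ℝ)..x, g y := fun x => by
    rw [← intervalIntegral.integral_Iic_sub_Iic hg.integrableOn hg.integrableOn]
    ring
  rw [funext hsplit]
  exact (intervalIntegral.integral_hasDerivAt_right hg.intervalIntegrable
    (hc.stronglyMeasurableAtFilter _ _) hc.continuousAt).const_add _

lemma hasDerivAt_steinSolution (hc : Continuous h) (hM : ∀ x, |h x| ≤ M) (x : ℝ) :
    HasDerivAt (steinSolution h)
      (x * steinSolution h x + (h x - ∫ y, h y ∂(gaussianReal 0 1))) x := by
  have hw := (gaussianPDFReal_pos 0 1 x one_ne_zero).ne'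
  have hkc : Continuous fun x => h x - ∫ y, h y ∂(gaussianReal 0 1) := hc.sub continuous_const
  have hki : Integrable (fun x => h x - ∫ y, h y ∂(gaussianReal 0 1)) (gaussianReal 0 1) :=
    .of_bound hkc.aestronglyMeasurable (2 * M) (.of_forall (abs_sub_integral_gaussianReal_le hM))
  refine ((hasDerivAt_integral_Iic ((integrable_gaussianReal_iff one_ne_zero).1 hki)
    (hkc.mul (continuous_gaussianPDFReal 0 1)) x).div (hasDerivAt_gaussianPDFReal 0 1 x)
    hw).congr_deriv ?_
  simp only [steinSolution, sub_zero, NNReal.coe_one, div_one]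
  field_simp
  ring

lemma continuous_steinSolution (hc : Continuous h) (hM : ∀ x, |h x| ≤ M) :
    Continuous (steinSolution h) :=
  continuous_iff_continuousAt.2 fun x => (hasDerivAt_steinSolution hc hM x).continuousAt

lemma deriv_steinSolution (hc : Continuous h) (hM : ∀ x, |h x| ≤ M) :
    deriv (steinSolution h) =
      fun x => x * steinSolution h x + (h x - ∫ y, h y ∂(gaussianReal 0 1)) :=
  funext fun x => (hasDerivAt_steinSolution hc hM x).deriv

lemma continuous_deriv_steinSolution (hc : Continuous h) (hM : ∀ x, |h x| ≤ M) :
    Continuous (deriv (steinSolution h)) := by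
  rw [deriv_steinSolution hc hM]
  exact (continuous_id.mul (continuous_steinSolution hc hM)).add (hc.sub continuous_const)

lemma abs_deriv_steinSolution_le (hc : Continuous h) (hM : ∀ x, |h x| ≤ M) (x : ℝ) :
    |deriv (steinSolution h) x| ≤ 4 * M := by
  rw [deriv_steinSolution hc hM]
  linarith [abs_add_le (x * steinSolution h x) (h x - ∫ y, h y ∂(gaussianReal 0 1)),
    abs_mul_steinSolution_le hc hM x, abs_sub_integral_gaussianReal_le hM x]

end SteinEquation

/-! ### Random variables with moments of all orders -/

/-- The real function `X` has finite moments of all orders under `μ`. These functions form an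
algebra, which takes care of the integrability conditions in Gaussian integration by parts. -/
def HasAllMoments {E : Type*} [MeasurableSpace E] (X : E → ℝ) (μ : Measure E) : Prop :=
  ∀ p : ℝ≥0, MemLp X p μ

namespace HasAllMoments

variable {E : Type*} [MeasurableSpace E] {μ : Measure E} {X Y : E → ℝ}

lemma integrable (hX : HasAllMoments X μ) : Integrable X μ :=
  memLp_one_iff_integrable.1 (by simpa using hX 1)

lemma add (hX : HasAllMoments X μ) (hY : HasAllMoments Y μ) :
    HasAllMoments (fun x => X x + Y x) μ :=
  fun p => (hX p).add (hY p)

lemma sub (hX : HasAllMoments X μ) (hY : HasAllMoments Y μ) :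
    HasAllMoments (fun x => X x - Y x) μ :=
  fun p => (hX p).sub (hY p)

lemma const_mul (c : ℝ) (hX : HasAllMoments X μ) : HasAllMoments (fun x => c * X x) μ :=
  fun p => (hX p).const_mul c

lemma sum {κ : Type*} (s : Finset κ) {X : κ → E → ℝ} (hX : ∀ i ∈ s, HasAllMoments (X i) μ) :
    HasAllMoments (fun x => ∑ i ∈ s, X i x) μ :=
  fun p => memLp_finsetSum s fun i hi => hX i hi p

lemma mul (hX : HasAllMoments X μ) (hY : HasAllMoments Y μ) :
    HasAllMoments (fun x => X x * Y x) μ := by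
  intro p
  have : ENNReal.HolderTriple ((2 * p : ℝ≥0) : ℝ≥0∞) ((2 * p : ℝ≥0) : ℝ≥0∞) p := ⟨by
    rw [ENNReal.coe_mul, ENNReal.coe_ofNat, ENNReal.mul_inv (by simp) (by simp), ← two_mul,
      ← mul_assoc, ENNReal.mul_inv_cancel (by simp) (by simp), one_mul]⟩
  exact (hY (2 * p)).mul (hX (2 * p))

lemma of_bound [IsFiniteMeasure μ] (hX : AEStronglyMeasurable X μ) {C : ℝ}
    (hC : ∀ x, |X x| ≤ C) : HasAllMoments X μ :=
  fun _ => .of_bound hX C (.of_forall hC)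

lemma const [IsFiniteMeasure μ] (c : ℝ) : HasAllMoments (fun _ : E => c) μ :=
  fun _ => memLp_const c

lemma pow [IsFiniteMeasure μ] (hX : HasAllMoments X μ) (k : ℕ) :
    HasAllMoments (fun x => X x ^ k) μ := by
  induction k with
  | zero => simpa only [pow_zero] using const 1
  | succ k ih => simpa only [pow_succ] using ih.mul hX

end HasAllMoments

/-! ### Integration by parts for independent standard Gaussian variables -/

section StdGaussianPi

variable {ι : Type*} [Fintype ι]

lemma measurePreserving_update [DecidableEq ι] {A : ι → Type*} [∀ j, MeasurableSpace (A j)]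
    (μ : ∀ j, Measure (A j)) [∀ j, IsProbabilityMeasure (μ j)] (i : ι) :
    MeasurePreserving (fun p : A i × (∀ j, A j) => Function.update p.2 i p.1)
      ((μ i).prod (Measure.pi μ)) (Measure.pi μ) := by
  have hm : Measurable fun p : A i × (∀ j, A j) => Function.update p.2 i p.1 :=
    measurable_update'.comp measurable_swap
  refine ⟨hm, (Measure.pi_eq fun s hs => ?_).symm⟩
  have hpre : (fun p : A i × (∀ j, A j) => Function.update p.2 i p.1) ⁻¹' Set.univ.pi s =
      s i ×ˢ Set.univ.pi (Function.update s i Set.univ) := by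
    ext p
    simp only [Set.mem_preimage, Set.mem_univ_pi, Set.mem_prod]
    rw [← and_forall_ne i, ← and_forall_ne (p := fun j => p.2 j ∈ _) i]
    simp +contextual [Function.update_of_ne]
  rw [Measure.map_apply hm (.univ_pi hs), hpre, Measure.prod_prod, Measure.pi_pi,
    ← Finset.mul_prod_erase _ _ (Finset.mem_univ i),
    ← Finset.mul_prod_erase _ (fun j => μ j (s j)) (Finset.mem_univ i), Function.update_self,
    measure_univ, one_mul]
  exact congrArg _ (Finset.prod_congr rfl fun j hj => by
    rw [Function.update_of_ne (Finset.ne_of_mem_erase hj)])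

lemma integral_pi_eq_integral_integral_update [DecidableEq ι] {A : ι → Type*}
    [∀ j, MeasurableSpace (A j)] (μ : ∀ j, Measure (A j)) [∀ j, IsProbabilityMeasure (μ j)]
    (i : ι) {g : (∀ j, A j) → ℝ} (hg : Integrable g (Measure.pi μ)) :
    ∫ x, g x ∂(Measure.pi μ) = ∫ x, ∫ t, g (Function.update x i t) ∂(μ i) ∂(Measure.pi μ) := by
  have mp := measurePreserving_update μ i
  have hg' := hg.aestronglyMeasurable
  rw [← mp.map_eq] at hg'
  calc ∫ x, g x ∂(Measure.pi μ)
      = ∫ p, g (Function.update p.2 i p.1) ∂((μ i).prod (Measure.pi μ)) := by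
        rw [← integral_map mp.aemeasurable hg', mp.map_eq]
    _ = ∫ x, ∫ t, g (Function.update x i t) ∂(μ i) ∂(Measure.pi μ) :=
        integral_prod_symm _ (mp.integrable_comp_of_integrable hg)

variable (ι) in
/-- The law of a family of independent standard Gaussian variables indexed by `ι`. -/
abbrev stdGaussianPi : Measure (ι → ℝ) :=
  Measure.pi fun _ => gaussianReal 0 1

lemma hasAllMoments_eval_stdGaussianPi (i : ι) :
    HasAllMoments (fun x => x i) (stdGaussianPi ι) :=
  fun p => (memLp_id_gaussianReal p).comp_measurePreserving
    (measurePreserving_eval (fun _ : ι => gaussianReal 0 1) i)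

lemma integral_eval_mul_stdGaussianPi [DecidableEq ι] (i : ι) {h h' : (ι → ℝ) → ℝ}
    (hd : ∀ x, HasDerivAt (fun t => h (Function.update x i t)) (h' x) (x i))
    (hi : Integrable h (stdGaussianPi ι)) (hi' : Integrable h' (stdGaussianPi ι))
    (hxi : Integrable (fun x => x i * h x) (stdGaussianPi ι)) :
    ∫ x, x i * h x ∂(stdGaussianPi ι) = ∫ x, h' x ∂(stdGaussianPi ι) := by
  have mp := measurePreserving_update (fun _ : ι => gaussianReal 0 1) i
  rw [integral_pi_eq_integral_integral_update _ i hxi,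
    integral_pi_eq_integral_integral_update _ i hi']
  refine integral_congr_ae ?_
  filter_upwards [(mp.integrable_comp_of_integrable hi).prod_left_ae,
    (mp.integrable_comp_of_integrable hi').prod_left_ae,
    (mp.integrable_comp_of_integrable hxi).prod_left_ae] with x h1 h2 h3
  have := integral_sub_mul_gaussianReal (μ := 0) (v := 1)
    (fun t => by simpa using hd (Function.update x i t)) h1 h2 (by simpa using h3)
  simpa using this

end StdGaussianPi

/-! ### Diagonal quadratic forms in independent standard Gaussian variables -/

section QuadForm

variable {ι : Type*} [Fintype ι]

/-- The diagonal quadratic form with coefficients `β`. -/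
def quadForm (β x : ι → ℝ) : ℝ := ∑ i, β i * x i ^ 2

/-- The diagonal quadratic form with coefficients `β`, centered under `stdGaussianPi ι`: a generic
element of the second Wiener chaos, in diagonal coordinates. -/
def centeredQuadForm (β x : ι → ℝ) : ℝ := ∑ i, β i * (x i ^ 2 - 1)

variable (α β γ : ι → ℝ)

lemma quadForm_eq_centeredQuadForm_add (x : ι → ℝ) :
    quadForm β x = centeredQuadForm β x + ∑ i, β i := by
  simp [quadForm, centeredQuadForm, mul_sub]

lemma centeredQuadForm_smul (c : ℝ) (x : ι → ℝ) :
    centeredQuadForm (c • β) x = c * centeredQuadForm β x := by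
  simp only [centeredQuadForm, Pi.smul_apply, smul_eq_mul, mul_assoc, Finset.mul_sum]

lemma measurable_centeredQuadForm : Measurable (centeredQuadForm β) := by
  unfold centeredQuadForm
  fun_prop

lemma hasAllMoments_centeredQuadForm : HasAllMoments (centeredQuadForm β) (stdGaussianPi ι) :=
  .sum _ fun i _ => (((hasAllMoments_eval_stdGaussianPi i).pow 2).sub (.const 1)).const_mul (β i)

lemma hasAllMoments_quadForm : HasAllMoments (quadForm β) (stdGaussianPi ι) :=
  .sum _ fun i _ => ((hasAllMoments_eval_stdGaussianPi i).pow 2).const_mul (β i)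

lemma hasDerivAt_centeredQuadForm_update [DecidableEq ι] (i : ι) (x : ι → ℝ) :
    HasDerivAt (fun t => centeredQuadForm β (Function.update x i t)) (2 * (β i * x i)) (x i) := by
  have hterm : ∀ j, HasDerivAt (fun t => β j * (Function.update x i t j ^ 2 - 1))
      (if j = i then 2 * (β i * x i) else 0) (x i) := fun j => by
    rcases eq_or_ne j i with rfl | hj
    · simp only [Function.update_self, if_true]
      exact ((((hasDerivAt_id (x j)).pow 2).sub_const 1).const_mul (β j)).congr_deriv
        (by simp only [id, Nat.cast_ofNat, Nat.add_one_sub_one, pow_one, mul_one]; ring)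
    · simpa only [Function.update_of_ne hj, if_neg hj] using hasDerivAt_const (x i) _
  simpa [centeredQuadForm] using HasDerivAt.fun_sum (u := Finset.univ) fun j _ => hterm j

lemma integral_centeredQuadForm_mul [DecidableEq ι] {ψ : (ι → ℝ) → ℝ} {D : ι → (ι → ℝ) → ℝ}
    (hψ : HasAllMoments ψ (stdGaussianPi ι)) (hD : ∀ i, HasAllMoments (D i) (stdGaussianPi ι))
    (hd : ∀ i x, HasDerivAt (fun t => ψ (Function.update x i t)) (D i x) (x i)) :
    ∫ x, centeredQuadForm β x * ψ x ∂(stdGaussianPi ι) =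
      ∫ x, ∑ i, β i * (x i * D i x) ∂(stdGaussianPi ι) := by
  have hx := fun i => hasAllMoments_eval_stdGaussianPi (ι := ι) i
  have by_parts : ∀ i, ∫ x, x i * (x i * ψ x) ∂(stdGaussianPi ι) =
      ∫ x, ψ x + x i * D i x ∂(stdGaussianPi ι) := fun i =>
    integral_eval_mul_stdGaussianPi i
      (fun x => by simpa using (hasDerivAt_id' (x i)).fun_mul (hd i x))
      ((hx i).mul hψ).integrable (hψ.add ((hx i).mul (hD i))).integrable
      ((hx i).mul ((hx i).mul hψ)).integrable
  have expand : ∀ x, centeredQuadForm β x * ψ x = ∑ i, β i * (x i * (x i * ψ x) - ψ x) :=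
    fun x => by
      rw [centeredQuadForm, Finset.sum_mul]
      exact Finset.sum_congr rfl fun i _ => by ring
  simp_rw [expand]
  rw [integral_finsetSum _ fun i _ =>
      ((((hx i).mul ((hx i).mul hψ)).sub hψ).const_mul _).integrable,
    integral_finsetSum _ fun i _ => (((hx i).mul (hD i)).const_mul _).integrable]
  refine Finset.sum_congr rfl fun i _ => ?_
  rw [integral_const_mul, integral_const_mul,
    integral_sub ((hx i).mul ((hx i).mul hψ)).integrable hψ.integrable, by_parts,
    integral_add hψ.integrable ((hx i).mul (hD i)).integrable, add_sub_cancel_left]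

lemma integral_centeredQuadForm : ∫ x, centeredQuadForm β x ∂(stdGaussianPi ι) = 0 := by
  classical
  simpa using integral_centeredQuadForm_mul β (.const 1) (fun _ => .const 0)
    fun i x => hasDerivAt_const (x i) (1 : ℝ)

lemma integral_quadForm : ∫ x, quadForm β x ∂(stdGaussianPi ι) = ∑ i, β i := by
  simp_rw [quadForm_eq_centeredQuadForm_add]
  rw [integral_add (hasAllMoments_centeredQuadForm β).integrable (integrable_const _),
    integral_centeredQuadForm]
  simp

variable {α} {p p' : ℝ → ℝ}

lemma hasDerivAt_comp_centeredQuadForm_update [DecidableEq ι] (hp : ∀ y, HasDerivAt p (p' y) y)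
    (i : ι) (x : ι → ℝ) :
    HasDerivAt (fun t => p (centeredQuadForm α (Function.update x i t)))
      (p' (centeredQuadForm α x) * (2 * (α i * x i))) (x i) := by
  have hQ := hasDerivAt_centeredQuadForm_update α i x
  simpa [Function.comp_def] using (hp _).comp (x i) hQ

lemma integral_centeredQuadForm_mul_mul_comp (hp : ∀ y, HasDerivAt p (p' y) y)
    (hpα : HasAllMoments (fun x => p (centeredQuadForm α x)) (stdGaussianPi ι))
    (hp'α : HasAllMoments (fun x => p' (centeredQuadForm α x)) (stdGaussianPi ι)) :
    ∫ x, centeredQuadForm β x * (centeredQuadForm γ x * p (centeredQuadForm α x))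
        ∂(stdGaussianPi ι) =
      2 * ∫ x, p (centeredQuadForm α x) * quadForm (β * γ) x ∂(stdGaussianPi ι) +
      2 * ∫ x, centeredQuadForm γ x * p' (centeredQuadForm α x) * quadForm (β * α) x
        ∂(stdGaussianPi ι) := by
  classical
  have hx := fun i => hasAllMoments_eval_stdGaussianPi (ι := ι) i
  have hγ := hasAllMoments_centeredQuadForm γ
  rw [integral_centeredQuadForm_mul β (hγ.mul hpα)
    (D := fun i x => 2 * (γ i * x i) * p (centeredQuadForm α x) +
      centeredQuadForm γ x * (p' (centeredQuadForm α x) * (2 * (α i * x i))))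
    (fun i => ((((hx i).const_mul _).const_mul 2).mul hpα).add
      (hγ.mul (hp'α.mul (((hx i).const_mul _).const_mul 2))))
    fun i x => by
      simpa using (hasDerivAt_centeredQuadForm_update γ i x).fun_mul
        (hasDerivAt_comp_centeredQuadForm_update hp i x),
    ← integral_const_mul, ← integral_const_mul,
    ← integral_add ((hpα.mul (hasAllMoments_quadForm _)).const_mul 2).integrable
      (((hγ.mul hp'α).mul (hasAllMoments_quadForm _)).const_mul 2).integrable]
  refine integral_congr_ae (.of_forall fun x => ?_)
  simp only [quadForm, Pi.mul_apply, Finset.mul_sum, ← Finset.sum_add_distrib]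
  exact Finset.sum_congr rfl fun i _ => by ring

lemma integral_centeredQuadForm_mul_comp (hp : ∀ y, HasDerivAt p (p' y) y)
    (hpα : HasAllMoments (fun x => p (centeredQuadForm α x)) (stdGaussianPi ι))
    (hp'α : HasAllMoments (fun x => p' (centeredQuadForm α x)) (stdGaussianPi ι)) :
    ∫ x, centeredQuadForm β x * p (centeredQuadForm α x) ∂(stdGaussianPi ι) =
      2 * ∫ x, p' (centeredQuadForm α x) * quadForm (β * α) x ∂(stdGaussianPi ι) := by
  classical
  have hx := fun i => hasAllMoments_eval_stdGaussianPi (ι := ι) i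
  rw [integral_centeredQuadForm_mul β hpα
    (D := fun i x => p' (centeredQuadForm α x) * (2 * (α i * x i)))
    (fun i => hp'α.mul (((hx i).const_mul _).const_mul 2))
    fun i x => hasDerivAt_comp_centeredQuadForm_update hp i x,
    ← integral_const_mul]
  refine integral_congr_ae (.of_forall fun x => ?_)
  simp only [quadForm, Pi.mul_apply, Finset.mul_sum]
  exact Finset.sum_congr rfl fun i _ => by ring

variable (α)

lemma integral_centeredQuadForm_mul_pow_succ (k : ℕ) :
    ∫ x, centeredQuadForm β x * centeredQuadForm α x ^ (k + 1) ∂(stdGaussianPi ι) =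
      2 * (k + 1) * (∫ x, centeredQuadForm (β * α) x * centeredQuadForm α x ^ k
          ∂(stdGaussianPi ι) +
        (∑ i, β i * α i) * ∫ x, centeredQuadForm α x ^ k ∂(stdGaussianPi ι)) := by
  have hα := hasAllMoments_centeredQuadForm α
  rw [integral_centeredQuadForm_mul_comp β (fun y => hasDerivAt_pow (k + 1) y) (hα.pow _)
    ((hα.pow _).const_mul _), mul_assoc, ← integral_const_mul (∑ i, β i * α i),
    ← integral_add ((hasAllMoments_centeredQuadForm _).mul (hα.pow k)).integrable
      ((hα.pow k).const_mul _).integrable, ← integral_const_mul ((k : ℝ) + 1)]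
  refine congrArg _ (integral_congr_ae (.of_forall fun x => ?_))
  simp only [quadForm_eq_centeredQuadForm_add, Nat.cast_add, Nat.cast_one, Nat.add_sub_cancel,
    Pi.mul_apply]
  ring

lemma integral_centeredQuadForm_mul_self :
    ∫ x, centeredQuadForm β x * centeredQuadForm α x ∂(stdGaussianPi ι) =
      2 * ∑ i, β i * α i := by
  simpa [integral_centeredQuadForm] using integral_centeredQuadForm_mul_pow_succ α β 0

lemma integral_centeredQuadForm_sq :
    ∫ x, centeredQuadForm α x ^ 2 ∂(stdGaussianPi ι) = 2 * ∑ i, α i ^ 2 := by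
  simpa only [pow_two] using integral_centeredQuadForm_mul_self α α

lemma integral_centeredQuadForm_mul_sq :
    ∫ x, centeredQuadForm β x * centeredQuadForm α x ^ 2 ∂(stdGaussianPi ι) =
      8 * ∑ i, β i * α i ^ 2 := by
  rw [integral_centeredQuadForm_mul_pow_succ α β 1]
  simp only [pow_one, integral_centeredQuadForm, integral_centeredQuadForm_mul_self, Pi.mul_apply,
    pow_two, mul_assoc]
  push_cast
  ring

lemma integral_centeredQuadForm_mul_cube :
    ∫ x, centeredQuadForm β x * centeredQuadForm α x ^ 3 ∂(stdGaussianPi ι) =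
      48 * ∑ i, β i * α i ^ 3 + 12 * (∑ i, β i * α i) * ∑ i, α i ^ 2 := by
  rw [integral_centeredQuadForm_mul_pow_succ α β 2]
  simp only [integral_centeredQuadForm_mul_sq, integral_centeredQuadForm_sq, Pi.mul_apply,
    pow_succ' _ 2, mul_assoc]
  push_cast
  ring

lemma integral_centeredQuadForm_pow_three :
    ∫ x, centeredQuadForm α x ^ 3 ∂(stdGaussianPi ι) = 8 * ∑ i, α i ^ 3 := by
  simpa only [pow_succ' _ 2] using integral_centeredQuadForm_mul_sq α α

lemma integral_centeredQuadForm_pow_four :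
    ∫ x, centeredQuadForm α x ^ 4 ∂(stdGaussianPi ι) =
      48 * ∑ i, α i ^ 4 + 12 * (∑ i, α i ^ 2) ^ 2 := by
  have := integral_centeredQuadForm_mul_cube α α
  simp only [← pow_succ', ← pow_two] at this
  rw [this]
  ring

end QuadForm

/-! ### Upper bound -/

section UpperBound

variable {ι : Type*} [Fintype ι] {α : ι → ℝ} {h g : ℝ → ℝ} {M : ℝ}

lemma hasAllMoments_comp_centeredQuadForm (α : ι → ℝ) (hg : Measurable g)
    (hM : ∀ x, |g x| ≤ M) :
    HasAllMoments (fun x => g (centeredQuadForm α x)) (stdGaussianPi ι) :=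
  .of_bound (hg.comp (measurable_centeredQuadForm α)).aestronglyMeasurable fun _ => hM _

lemma integral_comp_centeredQuadForm_sub (hα : ∑ i, α i ^ 2 = 1 / 2) (hc : Continuous h)
    (hM : ∀ x, |h x| ≤ M) :
    (∫ x, h (centeredQuadForm α x) ∂(stdGaussianPi ι)) - ∫ y, h y ∂(gaussianReal 0 1) =
      -2 * ∫ x, deriv (steinSolution h) (centeredQuadForm α x) * centeredQuadForm (α ^ 2) x
        ∂(stdGaussianPi ι) := by
  have hh := hasAllMoments_comp_centeredQuadForm α hc.measurable hM
  have hf := hasAllMoments_comp_centeredQuadForm α (continuous_steinSolution hc hM).measurable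
    (abs_steinSolution_le hc hM)
  have hf' := hasAllMoments_comp_centeredQuadForm α
    (continuous_deriv_steinSolution hc hM).measurable (abs_deriv_steinSolution_le hc hM)
  have hQ := hasAllMoments_centeredQuadForm α
  have by_parts := integral_centeredQuadForm_mul_comp α
    (fun y => (hasDerivAt_steinSolution hc hM y).differentiableAt.hasDerivAt) hf hf'
  calc (∫ x, h (centeredQuadForm α x) ∂(stdGaussianPi ι)) - ∫ y, h y ∂(gaussianReal 0 1)
      = ∫ x, h (centeredQuadForm α x) - ∫ y, h y ∂(gaussianReal 0 1) ∂(stdGaussianPi ι) := by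
        simp [integral_sub hh.integrable (integrable_const _)]
    _ = ∫ x, deriv (steinSolution h) (centeredQuadForm α x) -
          centeredQuadForm α x * steinSolution h (centeredQuadForm α x) ∂(stdGaussianPi ι) := by
        simp only [deriv_steinSolution hc hM, add_sub_cancel_left]
    _ = (∫ x, deriv (steinSolution h) (centeredQuadForm α x) ∂(stdGaussianPi ι)) -
          2 * ∫ x, deriv (steinSolution h) (centeredQuadForm α x) * quadForm (α * α) x
            ∂(stdGaussianPi ι) := by
        rw [integral_sub hf'.integrable (hQ.mul hf).integrable, by_parts]
    _ = -2 * ∫ x, deriv (steinSolution h) (centeredQuadForm α x) * centeredQuadForm (α ^ 2) x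
          ∂(stdGaussianPi ι) := by
        simp only [← pow_two α, quadForm_eq_centeredQuadForm_add, Pi.pow_apply, hα, mul_add]
        rw [integral_add (hf'.mul (hasAllMoments_centeredQuadForm _)).integrable
          (hf'.integrable.mul_const _), integral_mul_const]
        ring

lemma integral_comp_mul_centeredQuadForm_sq (hα : ∑ i, α i ^ 2 = 1 / 2) (hc : Continuous g)
    (hM : ∀ x, |g x| ≤ M) :
    ∫ x, g (centeredQuadForm α x) * centeredQuadForm (α ^ 2) x ∂(stdGaussianPi ι) =
      -2 * ∫ x, steinSolution g (centeredQuadForm α x) * quadForm (α ^ 3) x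
        ∂(stdGaussianPi ι) -
      2 * ∫ x, deriv (steinSolution g) (centeredQuadForm α x) * centeredQuadForm (α ^ 2) x ^ 2
        ∂(stdGaussianPi ι) := by
  have hφ := hasAllMoments_comp_centeredQuadForm α (continuous_steinSolution hc hM).measurable
    (abs_steinSolution_le hc hM)
  have hφ' := hasAllMoments_comp_centeredQuadForm α
    (continuous_deriv_steinSolution hc hM).measurable (abs_deriv_steinSolution_le hc hM)
  have hQ := hasAllMoments_centeredQuadForm α
  have hQ2 := hasAllMoments_centeredQuadForm (α ^ 2)
  have by_parts := integral_centeredQuadForm_mul_mul_comp α (α ^ 2)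
    (fun y => (hasDerivAt_steinSolution hc hM y).differentiableAt.hasDerivAt) hφ hφ'
  have stein : ∀ x, g (centeredQuadForm α x) * centeredQuadForm (α ^ 2) x =
      deriv (steinSolution g) (centeredQuadForm α x) * centeredQuadForm (α ^ 2) x -
        centeredQuadForm α x * (centeredQuadForm (α ^ 2) x *
          steinSolution g (centeredQuadForm α x)) +
        (∫ y, g y ∂(gaussianReal 0 1)) * centeredQuadForm (α ^ 2) x := fun x => by
    rw [deriv_steinSolution hc hM]
    ring
  have split : ∀ x, centeredQuadForm (α ^ 2) x *
        deriv (steinSolution g) (centeredQuadForm α x) * quadForm (α * α) x =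
      deriv (steinSolution g) (centeredQuadForm α x) * centeredQuadForm (α ^ 2) x ^ 2 +
        1 / 2 * (deriv (steinSolution g) (centeredQuadForm α x) * centeredQuadForm (α ^ 2) x) :=
    fun x => by
      simp only [← pow_two α, quadForm_eq_centeredQuadForm_add, Pi.pow_apply, hα]
      ring
  simp_rw [stein]
  rw [integral_add ((hφ'.mul hQ2).sub (hQ.mul (hQ2.mul hφ))).integrable
      (hQ2.const_mul _).integrable,
    integral_sub (hφ'.mul hQ2).integrable (hQ.mul (hQ2.mul hφ)).integrable, integral_const_mul,
    integral_centeredQuadForm, by_parts, ← pow_succ' α 2, integral_congr_ae (.of_forall split),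
    integral_add (hφ'.mul (hQ2.pow 2)).integrable ((hφ'.mul hQ2).const_mul _).integrable,
    integral_const_mul]
  ring

lemma abs_integral_comp_mul_centeredQuadForm_sq_le (hα0 : ∀ i, 0 ≤ α i)
    (hα : ∑ i, α i ^ 2 = 1 / 2) (hc : Continuous g) (hM : ∀ x, |g x| ≤ M) :
    |∫ x, g (centeredQuadForm α x) * centeredQuadForm (α ^ 2) x ∂(stdGaussianPi ι)| ≤
      4 * M * (√(2 * Real.pi) * ∑ i, α i ^ 3 + 4 * ∑ i, α i ^ 4) := by
  have hφ := abs_integral_mul_le_mul_integral (μ := stdGaussianPi ι)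
    (fun x => abs_steinSolution_le hc hM (centeredQuadForm α x))
    (hasAllMoments_quadForm (α ^ 3)).integrable fun x =>
      Finset.sum_nonneg fun i _ => mul_nonneg (pow_nonneg (hα0 i) 3) (sq_nonneg (x i))
  have hφ' := abs_integral_mul_le_mul_integral (μ := stdGaussianPi ι)
    (fun x => abs_deriv_steinSolution_le hc hM (centeredQuadForm α x))
    ((hasAllMoments_centeredQuadForm (α ^ 2)).pow 2).integrable fun x => sq_nonneg _
  rw [integral_quadForm] at hφ
  rw [integral_centeredQuadForm_sq] at hφ'
  simp only [Pi.pow_apply, ← pow_mul, Nat.reduceMul] at hφ hφ'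
  rw [integral_comp_mul_centeredQuadForm_sq hα hc hM, abs_le]
  rw [abs_le] at hφ hφ'
  constructor <;> linarith

lemma sum_pow_four_le_sum_pow_three (hα0 : ∀ i, 0 ≤ α i) (hα : ∑ i, α i ^ 2 ≤ 1) :
    ∑ i, α i ^ 4 ≤ ∑ i, α i ^ 3 := by
  refine Finset.sum_le_sum fun i _ => pow_le_pow_of_le_one (hα0 i) ?_ (by norm_num)
  have := Finset.single_le_sum (f := fun i => α i ^ 2) (fun i _ => sq_nonneg _)
    (Finset.mem_univ i)
  exact (sq_le_one_iff₀ (hα0 i)).1 (this.trans hα)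

theorem dTV_map_centeredQuadForm_le (hα0 : ∀ i, 0 ≤ α i) (hα : ∑ i, α i ^ 2 = 1 / 2) :
    dTV ((stdGaussianPi ι).map (centeredQuadForm α)) (gaussianReal 0 1) ≤
      224 * ∑ i, α i ^ 3 := by
  have hQ := measurable_centeredQuadForm α
  have := Measure.isProbabilityMeasure_map (μ := stdGaussianPi ι) hQ.aemeasurable
  refine dTV_le_of_continuous _ _ fun h hc h0 h1 => ?_
  have hM : ∀ x, |h x| ≤ 1 := fun x => abs_le.2 ⟨by linarith [h0 x], h1 x⟩
  have hsqrt : √(2 * Real.pi) ≤ 3 := Real.sqrt_le_iff.2 ⟨by norm_num, by linarith [Real.pi_lt_four]⟩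
  have hS3 : 0 ≤ ∑ i, α i ^ 3 := Finset.sum_nonneg fun i _ => pow_nonneg (hα0 i) 3
  have hS4 := sum_pow_four_le_sum_pow_three hα0 (hα.trans_le (by norm_num))
  rw [integral_map hQ.aemeasurable hc.aestronglyMeasurable,
    integral_comp_centeredQuadForm_sub hα hc hM, abs_mul, abs_neg, abs_two]
  calc _ ≤ 2 * (4 * (4 * 1) * (√(2 * Real.pi) * ∑ i, α i ^ 3 + 4 * ∑ i, α i ^ 4)) := by
        gcongr
        exact abs_integral_comp_mul_centeredQuadForm_sq_le hα0 hα
          (continuous_deriv_steinSolution hc hM) (abs_deriv_steinSolution_le hc hM)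
    _ ≤ 2 * (4 * (4 * 1) * (3 * ∑ i, α i ^ 3 + 4 * ∑ i, α i ^ 3)) := by gcongr
    _ = 224 * ∑ i, α i ^ 3 := by ring

end UpperBound

/-! ### Characteristic function of a diagonal quadratic form -/

section CharacteristicFunction

open Complex in
lemma log_one_add_ofReal_mul_I (x : ℝ) :
    log (1 + x * I) = ((Real.log (1 + x ^ 2) / 2 : ℝ) : ℂ) + (Real.arctan x : ℝ) * I := by
  have hx : 0 < 1 + x ^ 2 := by positivity
  have hexp : exp (((Real.log (1 + x ^ 2) / 2 : ℝ) : ℂ) + (Real.arctan x : ℝ) * I) =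
      1 + x * I := by
    have hs : ((√(1 + x ^ 2) : ℝ) : ℂ) ≠ 0 := ofReal_ne_zero.2 (Real.sqrt_pos.2 hx).ne'
    rw [exp_add_mul_I, ← ofReal_exp, ← ofReal_cos, ← ofReal_sin, Real.cos_arctan,
      Real.sin_arctan, ← Real.log_sqrt hx.le, Real.exp_log (Real.sqrt_pos.2 hx)]
    push_cast
    field_simp
  have him : (((Real.log (1 + x ^ 2) / 2 : ℝ) : ℂ) + (Real.arctan x : ℝ) * I).im =
      Real.arctan x := by
    rw [add_im, ofReal_im, im_ofReal_mul, I_im, mul_one, zero_add]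
  rw [← hexp, log_exp]
  · rw [him]
    linarith [Real.neg_pi_div_two_lt_arctan x, Real.pi_pos]
  · rw [him]
    linarith [Real.arctan_lt_pi_div_two x, Real.pi_pos]

open Complex in
lemma one_half_sub_ofReal_mul_I_ne_zero (u : ℝ) : (1 / 2 - u * I : ℂ) ≠ 0 := fun h => by
  simpa using congrArg re h

open Complex in
lemma log_pi_div_one_half_sub_ofReal_mul_I (u : ℝ) :
    log (Real.pi / (1 / 2 - u * I)) =
      ((Real.log (2 * Real.pi) - Real.log (1 + (2 * u) ^ 2) / 2 : ℝ) : ℂ) +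
        (Real.arctan (2 * u) : ℝ) * I := by
  have hpos : 0 < 1 + (2 * u) ^ 2 := by positivity
  have hne : 1 + (2 * u : ℝ) * I ≠ 0 := fun h => by simpa using congrArg re h
  have rationalize : (Real.pi / (1 / 2 - u * I) : ℂ) =
      ((2 * Real.pi / (1 + (2 * u) ^ 2) : ℝ) : ℂ) * (1 + (2 * u : ℝ) * I) := by
    have hpos' : ((1 + (2 * u) ^ 2 : ℝ) : ℂ) ≠ 0 := ofReal_ne_zero.2 hpos.ne'
    rw [ofReal_div, div_eq_iff (one_half_sub_ofReal_mul_I_ne_zero u), div_mul_eq_mul_div,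
      div_mul_eq_mul_div, eq_div_iff hpos']
    push_cast
    linear_combination (4 * Real.pi * u ^ 2 : ℂ) * I_sq
  rw [rationalize, log_ofReal_mul (by positivity) hne, log_one_add_ofReal_mul_I,
    Real.log_div Real.two_pi_pos.ne' hpos.ne']
  push_cast
  ring

open Complex in
lemma integral_cexp_mul_sq_sub_one_gaussianReal (u : ℝ) :
    ∫ x : ℝ, cexp ((u * (x ^ 2 - 1) : ℝ) * I) ∂(gaussianReal 0 1) =
      cexp (((-Real.log (1 + (2 * u) ^ 2) / 4 : ℝ) : ℂ) -
        ((u - Real.arctan (2 * u) / 2 : ℝ) : ℂ) * I) := by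
  have density : ∀ x : ℝ, gaussianPDFReal 0 1 x • cexp ((u * (x ^ 2 - 1) : ℝ) * I) =
      ((√(2 * Real.pi))⁻¹ : ℝ) * cexp (-(u * I)) * cexp (-(1 / 2 - u * I) * x ^ 2) := fun x => by
    rw [gaussianPDFReal, NNReal.coe_one, mul_one, mul_one, sub_zero, real_smul, ofReal_mul,
      ofReal_exp, mul_assoc, mul_assoc, ← exp_add, ← exp_add]
    congr 2
    push_cast
    ring
  have hb : 0 < (1 / 2 - u * I : ℂ).re := by simp
  rw [integral_gaussianReal_eq_integral_smul one_ne_zero]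
  simp_rw [density]
  rw [integral_const_mul, integral_gaussian_complex hb,
    cpow_def_of_ne_zero (div_ne_zero (ofReal_ne_zero.2 Real.pi_ne_zero)
      (one_half_sub_ofReal_mul_I_ne_zero u)), log_pi_div_one_half_sub_ofReal_mul_I,
    ← Real.exp_log (inv_pos.2 (Real.sqrt_pos.2 Real.two_pi_pos)), Real.log_inv,
    Real.log_sqrt Real.two_pi_pos.le, ofReal_exp, ← exp_add, ← exp_add]
  congr 1
  push_cast
  ring

variable {ι : Type*} [Fintype ι] (α : ι → ℝ)

open Complex in
lemma integral_cexp_centeredQuadForm :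
    ∫ x, cexp (centeredQuadForm α x * I) ∂(stdGaussianPi ι) =
      cexp (((-(∑ i, Real.log (1 + (2 * α i) ^ 2)) / 4 : ℝ) : ℂ) -
        ((∑ i, (α i - Real.arctan (2 * α i) / 2) : ℝ) : ℂ) * I) := by
  have hprod : ∀ x, cexp (centeredQuadForm α x * I) =
      ∏ i, cexp ((α i * (x i ^ 2 - 1) : ℝ) * I) := fun x => by
    rw [← exp_sum, centeredQuadForm, ofReal_sum, Finset.sum_mul]
  simp_rw [hprod]
  rw [integral_fintype_prod_eq_prod fun i (t : ℝ) => cexp ((α i * (t ^ 2 - 1) : ℝ) * I)]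
  simp_rw [integral_cexp_mul_sq_sub_one_gaussianReal]
  rw [← exp_sum, Finset.sum_sub_distrib, ← Finset.sum_mul, ← ofReal_sum, ← ofReal_sum,
    ← Finset.sum_neg_distrib, Finset.sum_div]

lemma integral_sin_centeredQuadForm :
    ∫ x, Real.sin (centeredQuadForm α x) ∂(stdGaussianPi ι) =
      -(Real.exp (-(∑ i, Real.log (1 + (2 * α i) ^ 2)) / 4) *
        Real.sin (∑ i, (α i - Real.arctan (2 * α i) / 2))) := by
  have hint : Integrable (fun x => Complex.exp (centeredQuadForm α x * Complex.I))
      (stdGaussianPi ι) := by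
    have := measurable_centeredQuadForm α
    exact .of_bound (by fun_prop) 1
      (.of_forall fun x => (Complex.norm_exp_ofReal_mul_I _).le)
  have him := integral_im hint
  simp only [RCLike.im_to_complex, Complex.exp_ofReal_mul_I_im] at him
  rw [him, integral_cexp_centeredQuadForm, Complex.exp_im, Complex.sub_re, Complex.sub_im,
    Complex.ofReal_re, Complex.ofReal_im, Complex.re_ofReal_mul, Complex.im_ofReal_mul,
    Complex.I_re, Complex.I_im, mul_zero, mul_one, sub_zero, zero_sub, Real.sin_neg, mul_neg]

end CharacteristicFunction

/-! ### Lower bound -/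

section LowerBound

lemma hasDerivAt_sub_arctan (x : ℝ) :
    HasDerivAt (fun y => y - Real.arctan y) (x ^ 2 / (1 + x ^ 2)) x := by
  have hx : 1 + x ^ 2 ≠ 0 := by positivity
  refine ((hasDerivAt_id' x).sub (Real.hasDerivAt_arctan x)).congr_deriv ?_
  field_simp
  ring

lemma pow_three_div_le_sub_arctan {x : ℝ} (hx : 0 ≤ x) :
    x ^ 3 / (3 * (1 + x ^ 2)) ≤ x - Real.arctan x := by
  have hd : ∀ y : ℝ, HasDerivAt (fun y => y - Real.arctan y - y ^ 3 / (3 * (1 + y ^ 2)))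
      (2 * y ^ 4 / (3 * (1 + y ^ 2) ^ 2)) y := fun y => by
    have hy : 3 * (1 + y ^ 2) ≠ 0 := by positivity
    refine ((hasDerivAt_sub_arctan y).sub ((hasDerivAt_pow 3 y).div
      (((hasDerivAt_pow 2 y).const_add 1).const_mul 3) hy)).congr_deriv ?_
    have hy' : 1 + y ^ 2 ≠ 0 := by positivity
    push_cast
    field_simp
    ring
  have hmono : Monotone fun y : ℝ => y - Real.arctan y - y ^ 3 / (3 * (1 + y ^ 2)) :=
    monotone_of_hasDerivAt_nonneg hd fun y => by positivity
  simpa using hmono hx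

lemma sub_arctan_le {x : ℝ} (hx : 0 ≤ x) : x - Real.arctan x ≤ x ^ 2 / 4 := by
  have hd : ∀ y : ℝ, HasDerivAt (fun y => y ^ 2 / 4 - (y - Real.arctan y))
      (y * (1 - y) ^ 2 / (2 * (1 + y ^ 2))) y := fun y => by
    refine (((hasDerivAt_pow 2 y).div_const 4).sub (hasDerivAt_sub_arctan y)).congr_deriv ?_
    have hy : 1 + y ^ 2 ≠ 0 := by positivity
    push_cast
    field_simp
    ring
  have hmono : MonotoneOn (fun y : ℝ => y ^ 2 / 4 - (y - Real.arctan y)) (Set.Ici 0) :=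
    monotoneOn_of_hasDerivWithinAt_nonneg (convex_Ici 0)
      (fun y _ => (hd y).continuousAt.continuousWithinAt)
      (fun y _ => (hd y).hasDerivWithinAt) fun y hy => by
        have : 0 ≤ y := interior_subset hy
        positivity
  simpa using hmono Set.self_mem_Ici hx hx

lemma integral_gaussianReal_eq_zero_of_odd {v : ℝ≥0} {h : ℝ → ℝ} (hh : Function.Odd h) :
    ∫ x, h x ∂(gaussianReal 0 v) = 0 := by
  have hneg : ∫ x, h x ∂(gaussianReal 0 v) = ∫ x, h (-x) ∂(gaussianReal 0 v) := by
    conv_lhs => rw [← neg_zero, ← gaussianReal_map_neg]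
    exact (MeasurableEquiv.neg ℝ).measurableEmbedding.integral_map h
  simp only [hh _, integral_neg] at hneg
  linarith

variable {ι : Type*} [Fintype ι] {α : ι → ℝ}

lemma one_half_le_exp_neg_sum_log (hα : ∑ i, α i ^ 2 = 1 / 2) :
    1 / 2 ≤ Real.exp (-(∑ i, Real.log (1 + (2 * α i) ^ 2)) / 4) := by
  have hlog : ∑ i, Real.log (1 + (2 * α i) ^ 2) ≤ 2 := calc
    _ ≤ ∑ i, 4 * α i ^ 2 := Finset.sum_le_sum fun i _ => by
      have := Real.log_le_sub_one_of_pos (x := 1 + (2 * α i) ^ 2) (by positivity)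
      linarith
    _ = 2 := by rw [← Finset.mul_sum, hα]; norm_num
  calc (1 / 2 : ℝ) ≤ -(∑ i, Real.log (1 + (2 * α i) ^ 2)) / 4 + 1 := by linarith
    _ ≤ _ := Real.add_one_le_exp _

lemma sum_pow_three_le_sum_sub_arctan (hα0 : ∀ i, 0 ≤ α i) (hα : ∑ i, α i ^ 2 ≤ 1 / 2) :
    4 / 9 * ∑ i, α i ^ 3 ≤ ∑ i, (α i - Real.arctan (2 * α i) / 2) := by
  rw [Finset.mul_sum]
  refine Finset.sum_le_sum fun i _ => ?_
  have hi0 := hα0 i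
  have hi : α i ^ 2 ≤ 1 / 2 :=
    (Finset.single_le_sum (fun j _ => sq_nonneg (α j)) (Finset.mem_univ i)).trans hα
  have hdenom : (2 * α i) ^ 3 / (3 * 3) ≤ (2 * α i) ^ 3 / (3 * (1 + (2 * α i) ^ 2)) := by
    gcongr
    linarith
  linarith [pow_three_div_le_sub_arctan (x := 2 * α i) (by positivity)]

lemma sum_sub_arctan_le_sum_sq (hα0 : ∀ i, 0 ≤ α i) :
    ∑ i, (α i - Real.arctan (2 * α i) / 2) ≤ 1 / 2 * ∑ i, α i ^ 2 := by
  rw [Finset.mul_sum]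
  refine Finset.sum_le_sum fun i _ => ?_
  have := hα0 i
  linarith [sub_arctan_le (x := 2 * α i) (by positivity)]

lemma sum_pow_three_le_abs_integral_sin (hα0 : ∀ i, 0 ≤ α i) (hα : ∑ i, α i ^ 2 = 1 / 2) :
    1 / 9 * ∑ i, α i ^ 3 ≤ |∫ x, Real.sin (centeredQuadForm α x) ∂(stdGaussianPi ι)| := by
  set θ := ∑ i, (α i - Real.arctan (2 * α i) / 2) with hθ
  have hS : 0 ≤ ∑ i, α i ^ 3 := Finset.sum_nonneg fun i _ => pow_nonneg (hα0 i) 3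
  have hθS : 4 / 9 * ∑ i, α i ^ 3 ≤ θ := sum_pow_three_le_sum_sub_arctan hα0 hα.le
  have hθ1 : θ ≤ 1 / 4 := (sum_sub_arctan_le_sum_sq hα0).trans_eq (by rw [hα]; norm_num)
  have hπ : (1 / 2 : ℝ) ≤ 2 / Real.pi :=
    (div_le_div_iff₀ two_pos Real.pi_pos).2 (by linarith [Real.pi_le_four])
  have hsin : 1 / 2 * θ ≤ Real.sin θ :=
    (mul_le_mul_of_nonneg_right hπ (by linarith)).trans
      (Real.mul_le_sin (by linarith) (by linarith [Real.pi_gt_three]))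
  rw [integral_sin_centeredQuadForm, ← hθ, abs_neg]
  calc 1 / 9 * ∑ i, α i ^ 3 ≤ 1 / 2 * (1 / 2 * θ) := by linarith
    _ ≤ Real.exp (-(∑ i, Real.log (1 + (2 * α i) ^ 2)) / 4) * Real.sin θ :=
      mul_le_mul (one_half_le_exp_neg_sum_log hα) hsin (by linarith) (by positivity)
    _ ≤ _ := le_abs_self _

theorem sum_pow_three_le_dTV_map_centeredQuadForm (hα0 : ∀ i, 0 ≤ α i)
    (hα : ∑ i, α i ^ 2 = 1 / 2) :
    1 / 18 * ∑ i, α i ^ 3 ≤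
      dTV ((stdGaussianPi ι).map (centeredQuadForm α)) (gaussianReal 0 1) := by
  have hm := measurable_centeredQuadForm α
  have := Measure.isProbabilityMeasure_map (μ := stdGaussianPi ι) hm.aemeasurable
  have htest := abs_integral_sub_le_mul_dTV ((stdGaussianPi ι).map (centeredQuadForm α))
    (gaussianReal 0 1) Real.measurable_sin Real.neg_one_le_sin Real.sin_le_one
  rw [integral_map hm.aemeasurable (by fun_prop),
    integral_gaussianReal_eq_zero_of_odd Real.sin_neg, sub_zero] at htest
  linarith [sum_pow_three_le_abs_integral_sin hα0 hα]

end LowerBound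

/-! ### Diagonalization of the quadratic variation -/

section Diagonalization

variable {ι : Type*} [Fintype ι]

lemma exists_orthogonal_diagonalization {A : Matrix ι ι ℝ} (hA : A.IsHermitian) :
    ∃ v : ι → ι → ℝ, (∀ x : ι → ℝ, ∑ i, (v i ⬝ᵥ x) ^ 2 = ∑ k, x k ^ 2) ∧
      ∀ i j, i ≠ j → v i ⬝ᵥ A.mulVec (v j) = 0 := by
  classical
  refine ⟨fun i => hA.eigenvectorBasis i, fun x => ?_, fun i j hij => ?_⟩
  · have := hA.eigenvectorBasis.sum_sq_norm_inner_right (WithLp.toLp 2 x)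
    rw [EuclideanSpace.norm_sq_eq] at this
    simpa [PiLp.inner_apply, dotProduct, mul_comm] using this
  · have horth : (hA.eigenvectorBasis i : ι → ℝ) ⬝ᵥ (hA.eigenvectorBasis j : ι → ℝ) = 0 := by
      simpa [PiLp.inner_apply, dotProduct, mul_comm] using
        hA.eigenvectorBasis.orthonormal.2 hij
    rw [hA.mulVec_eigenvectorBasis, dotProduct_smul, horth, smul_zero]

variable {Ω : Type*} [MeasurableSpace Ω] {P : Measure Ω}

lemma hasGaussianLaw_dotProduct {X : ι → Ω → ℝ} (hX : HasGaussianLaw (fun ω => (X · ω)) P)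
    {κ : Type*} [Finite κ] (v : κ → ι → ℝ) :
    HasGaussianLaw (fun ω i => v i ⬝ᵥ (X · ω)) P := by
  have := Fintype.ofFinite κ
  exact hX.map_fun (ContinuousLinearMap.pi fun i =>
    ∑ k, v i k • ContinuousLinearMap.proj (R := ℝ) (φ := fun _ : ι => ℝ) k) |>.congr
    (.of_forall fun ω => by ext i; simp [dotProduct])

lemma integral_dotProduct {X : ι → Ω → ℝ} (hX : ∀ i, Integrable (X i) P) (v : ι → ℝ) :
    ∫ ω, v ⬝ᵥ (X · ω) ∂P = v ⬝ᵥ fun i => ∫ ω, X i ω ∂P := by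
  simp only [dotProduct]
  rw [integral_finsetSum _ fun k _ => (hX k).const_mul _]
  simp only [integral_const_mul]

lemma integral_dotProduct_mul_dotProduct {X : ι → Ω → ℝ} (hX : ∀ i, MemLp (X i) 2 P)
    (v w : ι → ℝ) :
    ∫ ω, (v ⬝ᵥ (X · ω)) * (w ⬝ᵥ (X · ω)) ∂P =
      v ⬝ᵥ (Matrix.of fun i j => ∫ ω, X i ω * X j ω ∂P).mulVec w := by
  have hint : ∀ k m, Integrable (fun ω => v k * X k ω * (w m * X m ω)) P := fun k m =>
    ((hX k).const_mul (v k)).integrable_mul ((hX m).const_mul (w m))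
  simp only [dotProduct, Finset.sum_mul_sum, Matrix.mulVec, Matrix.of_apply]
  rw [integral_finsetSum _ fun k _ => integrable_finsetSum _ fun m _ => hint k m]
  refine Finset.sum_congr rfl fun k _ => ?_
  rw [integral_finsetSum _ fun m _ => hint k m, Finset.mul_sum]
  refine Finset.sum_congr rfl fun m _ => ?_
  rw [← integral_mul_const, ← integral_const_mul]
  exact integral_congr_ae (.of_forall fun ω => by ring)

lemma identDistrib_stdGaussianPi [IsProbabilityMeasure P] {Y : ι → Ω → ℝ}
    (hY : HasGaussianLaw (fun ω => (Y · ω)) P) (h0 : ∀ i, ∫ ω, Y i ω ∂P = 0)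
    (hcov : ∀ i j, i ≠ j → ∫ ω, Y i ω * Y j ω ∂P = 0) :
    IdentDistrib (fun ω => (Y · ω)) (fun x i => √(∫ ω, Y i ω ^ 2 ∂P) * x i) P
      (stdGaussianPi ι) := by
  have hscale : Measurable fun (x : ι → ℝ) i => √(∫ ω, Y i ω ^ 2 ∂P) * x i := by fun_prop
  refine ⟨hY.aemeasurable, hscale.aemeasurable, ?_⟩
  have hYi : ∀ i, HasGaussianLaw (Y i) P := fun i => hY.eval i
  have hind : iIndepFun Y P := hY.iIndepFun_of_covariance_eq_zero fun i j hij => by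
    simp [covariance, h0, hcov i j hij]
  rw [(iIndepFun_iff_map_fun_eq_pi_map fun i => (hYi i).aemeasurable).1 hind, stdGaussianPi,
    Measure.pi_map_pi fun i => by fun_prop]
  congr 1
  funext i
  rw [(hYi i).map_eq_gaussianReal, gaussianReal_map_const_mul, h0 i, mul_zero,
    variance_of_integral_eq_zero (hYi i).aemeasurable (h0 i)]
  congr 1
  ext
  have h2 : 0 ≤ ∫ ω, Y i ω ^ 2 ∂P := integral_nonneg fun ω => sq_nonneg _
  simp [Real.sq_sqrt h2, h2]

lemma identDistrib_sum_sq_quadForm [IsProbabilityMeasure P] {Y : ι → Ω → ℝ}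
    (hY : HasGaussianLaw (fun ω => (Y · ω)) P) (h0 : ∀ i, ∫ ω, Y i ω ∂P = 0)
    (hcov : ∀ i j, i ≠ j → ∫ ω, Y i ω * Y j ω ∂P = 0) :
    IdentDistrib (fun ω => ∑ i, Y i ω ^ 2) (quadForm fun i => ∫ ω, Y i ω ^ 2 ∂P) P
      (stdGaussianPi ι) := by
  have hQ : (quadForm fun i => ∫ ω, Y i ω ^ 2 ∂P) =
      (fun y : ι → ℝ => ∑ i, y i ^ 2) ∘ fun x i => √(∫ ω, Y i ω ^ 2 ∂P) * x i := by
    have h2 : ∀ i, 0 ≤ ∫ ω, Y i ω ^ 2 ∂P := fun i => integral_nonneg fun ω => sq_nonneg _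
    funext x
    simp only [Function.comp_apply, quadForm, mul_pow, Real.sq_sqrt (h2 _)]
  have hsq : Measurable fun y : ι → ℝ => ∑ i, y i ^ 2 := by fun_prop
  rw [hQ]
  exact (identDistrib_stdGaussianPi hY h0 hcov).comp hsq

theorem exists_identDistrib_sum_sq_quadForm [IsProbabilityMeasure P] {X : ι → Ω → ℝ}
    (hX : HasGaussianLaw (fun ω => (X · ω)) P) (h0 : ∀ i, ∫ ω, X i ω ∂P = 0) :
    ∃ l : ι → ℝ, (∀ i, 0 ≤ l i) ∧ ∑ i, l i = ∑ i, ∫ ω, X i ω ^ 2 ∂P ∧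
      IdentDistrib (fun ω => ∑ i, X i ω ^ 2) (quadForm l) P (stdGaussianPi ι) := by
  have hXi : ∀ i, HasGaussianLaw (X i) P := fun i => hX.eval i
  obtain ⟨v, hv, hdiag⟩ := exists_orthogonal_diagonalization
    (A := Matrix.of fun i j => ∫ ω, X i ω * X j ω ∂P)
    (by ext i j; simp [Matrix.conjTranspose_apply, mul_comm])
  let Y : ι → Ω → ℝ := fun i ω => v i ⬝ᵥ (X · ω)
  have hY : HasGaussianLaw (fun ω => (Y · ω)) P := hasGaussianLaw_dotProduct hX v
  have hY0 : ∀ i, ∫ ω, Y i ω ∂P = 0 := fun i => by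
    rw [integral_dotProduct fun k => (hXi k).integrable, funext h0]
    exact dotProduct_zero _
  have hYY : ∀ i j, i ≠ j → ∫ ω, Y i ω * Y j ω ∂P = 0 := fun i j hij =>
    (integral_dotProduct_mul_dotProduct (fun k => (hXi k).memLp_two) _ _).trans (hdiag i j hij)
  have hsum : ∀ ω, ∑ i, X i ω ^ 2 = ∑ i, Y i ω ^ 2 := fun ω => (hv _).symm
  refine ⟨fun i => ∫ ω, Y i ω ^ 2 ∂P, fun i => integral_nonneg fun ω => sq_nonneg _, ?_, ?_⟩
  · rw [← integral_finsetSum _ fun i _ => (hXi i).memLp_two.integrable_sq,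
      ← integral_finsetSum _ fun i _ => (hY.eval i).memLp_two.integrable_sq]
    simp_rw [hsum]
  · simp_rw [hsum]
    exact identDistrib_sum_sq_quadForm hY hY0 hYY

end Diagonalization

/-! ### Quadratic variation of a stationary Gaussian sequence -/

section QuadraticVariation

lemma IsCSG.hasGaussianLaw {Z : ℤ → Ω → ℝ} {r : ℤ → ℝ} (hZ : IsCSG Z r) (n : ℕ) :
    HasGaussianLaw (fun ω (i : Fin n) => Z (i : ℕ) ω) (ℙ : Measure Ω) := by
  have hm : Measurable fun ω (i : Fin n) => Z (i : ℕ) ω := measurable_pi_lambda _ fun i => hZ.1 _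
  refine ⟨isGaussian_of_map_eq_gaussianReal fun L => ?_⟩
  let e : Fin n ↪ ℤ := ⟨fun i => ((i : ℕ) : ℤ), fun i j h => by simpa [Fin.ext_iff] using h⟩
  obtain ⟨v, hv⟩ := hZ.2.1 (Finset.univ.map e)
    (Function.extend e (fun i => L fun j => if i = j then 1 else 0) 0)
  refine ⟨0, v, ?_⟩
  rw [Measure.map_map (by fun_prop) hm, ← hv]
  refine congrArg (Measure.map · ℙ) (funext fun ω => ?_)
  refine (L.toLinearMap.pi_apply_eq_sum_univ _).trans ?_
  rw [Finset.sum_map]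
  refine Finset.sum_congr rfl fun i _ => ?_
  rw [e.injective.extend_apply, smul_eq_mul, mul_comm]
  rfl

lemma IsCSG.integral_eq_zero {Z : ℤ → Ω → ℝ} {r : ℤ → ℝ} (hZ : IsCSG Z r) (k : ℤ) :
    ∫ ω, Z k ω = 0 := by
  obtain ⟨v, hv⟩ := hZ.2.1 {k} 1
  simp only [Finset.sum_singleton, Pi.one_apply, one_mul] at hv
  have := integral_map (hZ.1 k).aemeasurable (μ := ℙ) (f := id) (by fun_prop)
  rw [hv] at this
  simpa using this.symm

lemma IsCSG.exists_identDistrib_U2 [IsProbabilityMeasure (ℙ : Measure Ω)] {Z : ℤ → Ω → ℝ}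
    {r : ℤ → ℝ} (hZ : IsCSG Z r) {n : ℕ} (hn : 1 ≤ n) :
    ∃ l : Fin n → ℝ, (∀ i, 0 ≤ l i) ∧ l ≠ 0 ∧
      IdentDistrib (U2 Z (r 0) n) (centeredQuadForm l) ℙ (stdGaussianPi (Fin n)) := by
  obtain ⟨l, hl0, hlsum, hlaw⟩ := exists_identDistrib_sum_sq_quadForm (hZ.hasGaussianLaw n)
    fun i => hZ.integral_eq_zero _
  have hn0 : (0 : ℝ) < n := by exact_mod_cast hn
  have htrace : ∑ i, l i = n * r 0 := by
    have hvar : ∀ k : ℤ, ∫ ω, Z k ω ^ 2 = r 0 := fun k => by simpa [pow_two] using hZ.2.2.1 k k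
    simp [hlsum, hvar]
  have hU : U2 Z (r 0) n =
      (fun y => √n / n * (y - ∑ i, l i)) ∘ fun ω => ∑ i : Fin n, Z (i : ℕ) ω ^ 2 := by
    funext ω
    simp only [U2, Qvar, f2, Finset.sum_range, htrace, Function.comp_apply]
    field_simp
  have hQ : centeredQuadForm ((√n / n) • l) =
      (fun y => √n / n * (y - ∑ i, l i)) ∘ quadForm l := by
    funext x
    rw [centeredQuadForm_smul, Function.comp_apply, quadForm_eq_centeredQuadForm_add,
      add_sub_cancel_right]
  refine ⟨(√n / n) • l, fun i => mul_nonneg (by positivity) (hl0 i), fun h => ?_, ?_⟩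
  · have hl : l = 0 := (smul_eq_zero.1 h).resolve_left (by positivity)
    have := mul_pos hn0 hZ.2.2.2
    simp [← htrace, hl] at this
  · rw [hU, hQ]
    exact hlaw.comp (by fun_prop)

theorem IsCSG.exists_identDistrib_F2stat [IsProbabilityMeasure (ℙ : Measure Ω)] {Z : ℤ → Ω → ℝ}
    {r : ℤ → ℝ} (hZ : IsCSG Z r) {n : ℕ} (hn : 1 ≤ n) :
    ∃ α : Fin n → ℝ, (∀ i, 0 ≤ α i) ∧ ∑ i, α i ^ 2 = 1 / 2 ∧
      IdentDistrib (F2stat Z (r 0) n) (centeredQuadForm α) ℙ (stdGaussianPi (Fin n)) := by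
  obtain ⟨l, hl0, hl, hlaw⟩ := hZ.exists_identDistrib_U2 hn
  set V := varU2 Z (r 0) n
  have hV : V = 2 * ∑ i, l i ^ 2 := hlaw.pow.integral_eq.trans (integral_centeredQuadForm_sq l)
  have hVpos : 0 < V := by
    obtain ⟨i, hi⟩ := Function.ne_iff.1 hl
    rw [hV]
    exact mul_pos two_pos (Finset.sum_pos' (fun j _ => sq_nonneg (l j))
      ⟨i, Finset.mem_univ i, pow_pos ((hl0 i).lt_of_ne' hi) 2⟩)
  refine ⟨(√V)⁻¹ • l, fun i => mul_nonneg (by positivity) (hl0 i), ?_, ?_⟩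
  · simp only [Pi.smul_apply, smul_eq_mul, mul_pow, inv_pow, Real.sq_sqrt hVpos.le]
    rw [← Finset.mul_sum, inv_mul_eq_div, div_eq_iff hVpos.ne']
    linarith
  · have hF : F2stat Z (r 0) n = fun ω => (√V)⁻¹ * U2 Z (r 0) n ω :=
      funext fun ω => div_eq_inv_mul _ _
    rw [hF, funext (centeredQuadForm_smul l (√V)⁻¹)]
    exact hlaw.const_mul _

variable {F : Ω → ℝ} {ι : Type*} [Fintype ι] {α : ι → ℝ}

lemma kappa3_of_identDistrib (h : IdentDistrib F (centeredQuadForm α) ℙ (stdGaussianPi ι)) :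
    kappa3 F = 8 * ∑ i, α i ^ 3 :=
  h.pow.integral_eq.trans (integral_centeredQuadForm_pow_three α)

lemma kappa4_of_identDistrib (h : IdentDistrib F (centeredQuadForm α) ℙ (stdGaussianPi ι)) :
    kappa4 F = 48 * ∑ i, α i ^ 4 := by
  have h4 := h.pow.integral_eq.trans (integral_centeredQuadForm_pow_four α)
  have h2 := h.pow.integral_eq.trans (integral_centeredQuadForm_sq α)
  rw [kappa4, h4, h2]
  ring

theorem dTV_bounds_of_identDistrib (hα0 : ∀ i, 0 ≤ α i) (hα : ∑ i, α i ^ 2 = 1 / 2)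
    (h : IdentDistrib F (centeredQuadForm α) ℙ (stdGaussianPi ι)) :
    1 / 864 * max (kappa4 F) |kappa3 F| ≤ dTV (Measure.map F ℙ) (gaussianReal 0 1) ∧
      dTV (Measure.map F ℙ) (gaussianReal 0 1) ≤ 28 * max (kappa4 F) |kappa3 F| := by
  have hlower := sum_pow_three_le_dTV_map_centeredQuadForm hα0 hα
  have hupper := dTV_map_centeredQuadForm_le hα0 hα
  have h34 : ∑ i, α i ^ 4 ≤ ∑ i, α i ^ 3 :=
    sum_pow_four_le_sum_pow_three hα0 (hα.le.trans (by norm_num))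
  have hS : 0 ≤ ∑ i, α i ^ 3 := Finset.sum_nonneg fun i _ => pow_nonneg (hα0 i) 3
  have hκ3 : |kappa3 F| = 8 * ∑ i, α i ^ 3 := by
    rw [kappa3_of_identDistrib h, abs_of_nonneg (by positivity)]
  have hmax : max (kappa4 F) |kappa3 F| ≤ 48 * ∑ i, α i ^ 3 := by
    rw [hκ3, kappa4_of_identDistrib h]
    exact max_le (by linarith) (by linarith)
  rw [h.map_eq]
  exact ⟨by linarith, by linarith [le_max_right (kappa4 F) |kappa3 F|]⟩

end QuadraticVariation

theorem statement_11_general [IsProbabilityMeasure (ℙ : Measure Ω)] {Z : ℤ → Ω → ℝ} {r : ℤ → ℝ}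
    (hZ : IsCSG Z r) {n : ℕ} (hn : 1 ≤ n) :
    1 / 864 * max (kappa4 (F2stat Z (r 0) n)) |kappa3 (F2stat Z (r 0) n)| ≤
        dTV (Measure.map (F2stat Z (r 0) n) (ℙ : Measure Ω)) (gaussianReal 0 1) ∧
      dTV (Measure.map (F2stat Z (r 0) n) (ℙ : Measure Ω)) (gaussianReal 0 1) ≤
        28 * max (kappa4 (F2stat Z (r 0) n)) |kappa3 (F2stat Z (r 0) n)| := by
  obtain ⟨α, hα0, hα, hlaw⟩ := hZ.exists_identDistrib_F2stat hn
  exact dTV_bounds_of_identDistrib hα0 hα hlaw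

/-- optimal fourth-moment theorem for the standardized quadratic
variation: two-sided total-variation bounds by `max(κ₄, |κ₃|)`. -/
theorem statement_11
    {Ω : Type*} [MeasureSpace Ω] [IsProbabilityMeasure (ℙ : Measure Ω)]
    (Z : ℤ → Ω → ℝ) (r : ℤ → ℝ) (hZ : IsCSG Z r)
    (hk4 : Filter.Tendsto (fun n : ℕ => kappa4 (F2stat Z (r 0) n)) Filter.atTop (nhds 0)) :
    ∃ c > (0 : ℝ), ∃ C > (0 : ℝ), ∀ n : ℕ, 1 ≤ n →
      c * max (kappa4 (F2stat Z (r 0) n)) |kappa3 (F2stat Z (r 0) n)| ≤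
          dTV (Measure.map (F2stat Z (r 0) n) (ℙ : Measure Ω)) (gaussianReal 0 1) ∧
        dTV (Measure.map (F2stat Z (r 0) n) (ℙ : Measure Ω)) (gaussianReal 0 1) ≤
          C * max (kappa4 (F2stat Z (r 0) n)) |kappa3 (F2stat Z (r 0) n)| :=
  ⟨1 / 864, by norm_num, 28, by norm_num, fun _ hn => statement_11_general hZ hn⟩
end
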